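/- Let W ⊂ P^2 be a line count configuration of type (1, 2, 3, …, t) over an algebraically closed field k of characteristic 0. Then for every integer r ≥ 1, α(2rW) ≥ r·α(W) + r. -/

import Mathlib

open scoped LinearAlgebra.Projectivization

/-- The homogeneous ideal of a point `P` of `ℙ²`: all polynomials vanishing on the
line through the origin corresponding to `P`. -/
noncomputable def pointIdeal (k : Type*) [Field k] (P : ℙ k (Fin 3 → k)) :
    Ideal (MvPolynomial (Fin 3) k) where
  carrier := {f | ∀ c : k, MvPolynomial.eval (c • P.rep) f = 0}
  zero_mem' := by intro c; simp
  add_mem' := by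
    intro a b ha hb c
    simp [ha c, hb c]
  smul_mem' := by
    intro r f hf c
    simp [smul_eq_mul, hf c]

/-- The defining ideal `I_{mW} = ⋂_{P ∈ W} I_P^m` of the fat point scheme `mW`. -/
noncomputable def fatIdeal (k : Type*) [Field k] (W : Finset (ℙ k (Fin 3 → k))) (m : ℕ) :
    Ideal (MvPolynomial (Fin 3) k) :=
  ⨅ P ∈ W, (pointIdeal k P) ^ m

/-- `α(I)`: the least degree `d` such that `I` contains a nonzero homogeneous
polynomial of degree `d`. -/
noncomputable def alphaDeg (k : Type*) [Field k] (I : Ideal (MvPolynomial (Fin 3) k)) : ℕ :=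
  sInf {d : ℕ | ∃ f ∈ I, f ≠ 0 ∧ MvPolynomial.IsHomogeneous f d}

open MvPolynomial

section LineCount

variable {k : Type*} [Field k]

/-- The Taylor expansion of `F` at `v`, as a polynomial in a parameter with generic direction. -/
noncomputable def taylorAt (v : Fin 3 → k) :
    MvPolynomial (Fin 3) k →ₐ[k] Polynomial (MvPolynomial (Fin 3) k) :=
  aeval fun i => Polynomial.C (C (v i)) + Polynomial.C (X i) * Polynomial.X

/-- The restriction of a polynomial to the parametrized line `s ↦ w + s • q`. -/
noncomputable def restrictLine (w q : Fin 3 → k) :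
    MvPolynomial (Fin 3) k →ₐ[k] Polynomial k :=
  aeval fun i => Polynomial.C (w i) + Polynomial.C (q i) * Polynomial.X

/-- `F` vanishes to order at least `m` along the punctured line of representatives of `P`. -/
def VanishesToOrder (m : ℕ) (P : ℙ k (Fin 3 → k)) (F : MvPolynomial (Fin 3) k) : Prop :=
  ∀ c : k, c ≠ 0 → Polynomial.X ^ m ∣ taylorAt (c • P.rep) F

lemma map_eval_taylorAt (v q : Fin 3 → k) (F : MvPolynomial (Fin 3) k) :
    Polynomial.map (eval q) (taylorAt v F) = restrictLine v q F := by
  induction F using MvPolynomial.induction_on with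
  | C a => simp [taylorAt, restrictLine, Polynomial.algebraMap_apply]
  | add p q hp hq => simp [hp, hq]
  | mul_X p i hp => rw [map_mul, map_mul, Polynomial.map_mul, hp]; simp [taylorAt, restrictLine]

lemma eval_restrictLine (w q : Fin 3 → k) (s : k) (F : MvPolynomial (Fin 3) k) :
    (restrictLine w q F).eval s = eval (w + s • q) F := by
  induction F using MvPolynomial.induction_on with
  | C a => simp [restrictLine]
  | add p q hp hq => simp [hp, hq]
  | mul_X p i hp =>
    rw [map_mul, map_mul, Polynomial.eval_mul, hp]; simp [restrictLine]; ring_nf; simp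

lemma restrictLine_comp (w q : Fin 3 → k) (s : k) (F : MvPolynomial (Fin 3) k) :
    (restrictLine w q F).comp (Polynomial.X + Polynomial.C s) =
      restrictLine (w + s • q) q F := by
  induction F using MvPolynomial.induction_on with
  | C a => simp [restrictLine]
  | add p q hp hq => simp [hp, hq]
  | mul_X p i hp =>
    rw [map_mul, map_mul, Polynomial.mul_comp, hp]
    congr 1
    simp [restrictLine]
    ring

lemma natDegree_restrictLine_le (w q : Fin 3 → k) (F : MvPolynomial (Fin 3) k) :
    (restrictLine w q F).natDegree ≤ F.totalDegree := by
  have := MvPolynomial.aeval_natDegree_le (m := F.totalDegree) F le_rfl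
    (fun i => Polynomial.C (w i) + Polynomial.C (q i) * Polynomial.X) (n := 1) fun i => by
      compute_degree
  simpa [restrictLine] using this

lemma taylorAt_coeff_zero (v : Fin 3 → k) (F : MvPolynomial (Fin 3) k) :
    (taylorAt v F).coeff 0 = C (eval v F) := by
  induction F using MvPolynomial.induction_on with
  | C a => simp [taylorAt, Polynomial.algebraMap_apply]
  | add p q hp hq => simp [hp, hq]
  | mul_X p i hp => rw [map_mul, Polynomial.mul_coeff_zero, hp]; simp [taylorAt]

lemma X_dvd_taylorAt_iff (v : Fin 3 → k) (F : MvPolynomial (Fin 3) k) :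
    Polynomial.X ∣ taylorAt v F ↔ eval v F = 0 := by
  rw [Polynomial.X_dvd_iff, taylorAt_coeff_zero]
  simp

lemma vanishesToOrder_of_mem_pow {m : ℕ} {P : ℙ k (Fin 3 → k)} {F : MvPolynomial (Fin 3) k}
    (hF : F ∈ pointIdeal k P ^ m) : VanishesToOrder m P F := by
  intro c _
  have hle : pointIdeal k P ≤ (Ideal.span {Polynomial.X}).comap (taylorAt (c • P.rep)) := by
    intro f hf
    rw [Ideal.mem_comap, Ideal.mem_span_singleton, X_dvd_taylorAt_iff]
    exact hf c
  have := (Ideal.pow_right_mono hle m).trans (Ideal.le_comap_pow _ m) hF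
  rwa [Ideal.mem_comap, Ideal.span_singleton_pow, Ideal.mem_span_singleton] at this

lemma exists_eq_sum_of_isHomogeneous_one {φ : MvPolynomial (Fin 3) k}
    (hφ : φ.IsHomogeneous 1) : ∃ a : Fin 3 → k, φ = ∑ i, C (a i) * X i := by
  have h : φ ∈ homogeneousSubmodule (Fin 3) k 1 := hφ
  rw [homogeneousSubmodule_one_eq_span_X, Submodule.mem_span_range_iff_exists_fun] at h
  obtain ⟨a, ha⟩ := h
  exact ⟨a, by simp [← ha, smul_eq_C_mul]⟩

lemma taylorAt_of_isHomogeneous_one {φ : MvPolynomial (Fin 3) k} (hφ : φ.IsHomogeneous 1)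
    (v : Fin 3 → k) :
    taylorAt v φ = Polynomial.C (C (eval v φ)) + Polynomial.C φ * Polynomial.X := by
  obtain ⟨a, rfl⟩ := exists_eq_sum_of_isHomogeneous_one hφ
  simp [taylorAt, Fin.sum_univ_three, Polynomial.algebraMap_apply]
  ring

lemma eval_smul_of_isHomogeneous_one {φ : MvPolynomial (Fin 3) k} (hφ : φ.IsHomogeneous 1)
    (c : k) (v : Fin 3 → k) : eval (c • v) φ = c * eval v φ := by
  obtain ⟨a, rfl⟩ := exists_eq_sum_of_isHomogeneous_one hφ
  simp [Fin.sum_univ_three]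
  ring

lemma VanishesToOrder.of_mul_left {m : ℕ} {P : ℙ k (Fin 3 → k)}
    {φ G : MvPolynomial (Fin 3) k} (hφ : φ.IsHomogeneous 1) (hne : eval P.rep φ ≠ 0)
    (h : VanishesToOrder m P (φ * G)) : VanishesToOrder m P G := by
  intro c hc
  refine Polynomial.prime_X.pow_dvd_of_dvd_mul_left (a := taylorAt (c • P.rep) φ) m ?_ ?_
  · rw [X_dvd_taylorAt_iff, eval_smul_of_isHomogeneous_one hφ]
    exact mul_ne_zero hc hne
  · rw [← map_mul]
    exact h c hc

lemma VanishesToOrder.of_pow_mul_left {m : ℕ} {P : ℙ k (Fin 3 → k)}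
    {φ G : MvPolynomial (Fin 3) k} (hφ : φ.IsHomogeneous 1) (hne : eval P.rep φ ≠ 0) (s : ℕ)
    (h : VanishesToOrder m P (φ ^ s * G)) : VanishesToOrder m P G := by
  induction s with
  | zero => simpa using h
  | succ s ih => exact ih (.of_mul_left hφ hne (by rwa [← mul_assoc, ← pow_succ']))

lemma VanishesToOrder.of_mul_left_of_eval_eq_zero {m : ℕ} {P : ℙ k (Fin 3 → k)}
    {φ G : MvPolynomial (Fin 3) k} (hφ : φ.IsHomogeneous 1) (h0 : φ ≠ 0)
    (hP : eval P.rep φ = 0)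
    (h : VanishesToOrder (m + 1) P (φ * G)) : VanishesToOrder m P G := by
  intro c hc
  have h1 := h c hc
  rw [map_mul, taylorAt_of_isHomogeneous_one hφ, eval_smul_of_isHomogeneous_one hφ, hP, pow_succ',
    mul_zero, C_0, Polynomial.C_0, zero_add, mul_comm (Polynomial.C φ), mul_assoc] at h1
  refine Polynomial.prime_X.pow_dvd_of_dvd_mul_left (a := Polynomial.C φ) m ?_
    ((mul_dvd_mul_iff_left Polynomial.X_ne_zero).1 h1)
  rw [Polynomial.X_dvd_iff]
  simpa using h0

lemma X_sub_C_pow_dvd_restrictLine {m : ℕ} {P : ℙ k (Fin 3 → k)} {F : MvPolynomial (Fin 3) k}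
    (h : VanishesToOrder m P F) {w q : Fin 3 → k} {s c : k} (hc : c ≠ 0)
    (hs : w + s • q = c • P.rep) :
    (Polynomial.X - Polynomial.C s) ^ m ∣ restrictLine w q F := by
  have h1 : Polynomial.X ^ m ∣ restrictLine (w + s • q) q F := by
    rw [hs, ← map_eval_taylorAt]
    simpa using Polynomial.map_dvd (eval q) (h c hc)
  rw [← restrictLine_comp] at h1
  obtain ⟨g, hg⟩ := h1
  refine ⟨g.comp (Polynomial.X - Polynomial.C s), ?_⟩
  have h2 := congrArg (fun p => p.comp (Polynomial.X - Polynomial.C s)) hg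
  simpa [Polynomial.comp_assoc] using h2

/-- In a plane, a line through `w` avoiding the origin and transverse to finitely many given
nonzero directions exists. -/
lemma exists_transverse_direction [Infinite k] {K : Submodule k (Fin 3 → k)}
    (hK : Module.finrank k K = 2) {ι : Type*} [Finite ι] (p : ι → K) (hp : ∀ i, p i ≠ 0)
    {w : K} (hw : w ≠ 0) :
    ∃ q : K, ∀ i, ∃ c s : k, c ≠ 0 ∧ w + s • q = c • p i := by
  have hlt : ∀ v : K, Submodule.span k {v} ≠ ⊤ := by
    intro v hv
    have h1 := finrank_span_le_card (R := k) ({v} : Set K)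
    rw [hv, finrank_top, hK] at h1
    simp at h1
  have hcover : ⋃ i : Option ι,
      ((Submodule.span k {i.elim w p} : Submodule k K) : Set K) ≠ Set.univ := by
    intro h
    obtain ⟨i, hi⟩ := Subspace.exists_eq_top_of_iUnion_eq_univ h
    exact hlt _ hi
  obtain ⟨q, hq⟩ := (Set.ne_univ_iff_exists_notMem _).1 hcover
  simp only [Set.mem_iUnion, not_exists, SetLike.mem_coe] at hq
  refine ⟨q, fun i => ?_⟩
  have hw' : q ∉ Submodule.span k {w} := hq none
  have hp' : q ∉ Submodule.span k {p i} := hq (some i)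
  have hli : LinearIndependent k ![w, q] := by
    rw [LinearIndependent.pair_iff' hw]
    intro a ha
    exact hw' (Submodule.mem_span_singleton.2 ⟨a, ha⟩)
  have hspan : Submodule.span k (Set.range ![w, q]) = ⊤ :=
    hli.span_eq_top_of_card_eq_finrank (by simp [hK])
  have hmem : p i ∈ Submodule.span k (Set.range ![w, q]) := hspan ▸ Submodule.mem_top
  rw [Matrix.range_cons_cons_empty, Submodule.mem_span_pair] at hmem
  obtain ⟨a, b, hab⟩ := hmem
  have ha : a ≠ 0 := by
    rintro rfl
    have hb : b ≠ 0 := by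
      rintro rfl
      exact hp i (by simp [← hab])
    refine hp' (Submodule.mem_span_singleton.2 ⟨b⁻¹, ?_⟩)
    rw [← hab, zero_smul, zero_add, smul_smul, inv_mul_cancel₀ hb, one_smul]
  refine ⟨a⁻¹, a⁻¹ * b, inv_ne_zero ha, ?_⟩
  rw [← hab, smul_add, smul_smul, smul_smul, inv_mul_cancel₀ ha, one_smul]

/-- A polynomial of low degree vanishing to high order at points of a line vanishes on that line. -/
lemma eval_eq_zero_of_totalDegree_lt [Infinite k] {K : Submodule k (Fin 3 → k)}
    (hK : Module.finrank k K = 2) {S : Finset (ℙ k (Fin 3 → k))} (hS : ∀ P ∈ S, P.rep ∈ K)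
    {m : ℕ} {F : MvPolynomial (Fin 3) k} (hF : ∀ P ∈ S, VanishesToOrder m P F)
    (hdeg : F.totalDegree < S.card * m) {w : Fin 3 → k} (hwK : w ∈ K) (hw : w ≠ 0) :
    eval w F = 0 := by
  obtain ⟨q, hq⟩ := exists_transverse_direction hK
    (fun P : S => (⟨P.1.rep, hS P.1 P.2⟩ : K))
    (fun P h => P.1.rep_nonzero (congrArg Subtype.val h)) (w := ⟨w, hwK⟩)
    (fun h => hw (congrArg Subtype.val h))
  choose c s hc hs using hq
  have hs' : ∀ P : S, w + s P • (q : Fin 3 → k) = c P • P.1.rep :=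
    fun P => congrArg Subtype.val (hs P)
  have hinj : Function.Injective s := by
    intro P Q hPQ
    have h1 : c P • P.1.rep = c Q • Q.1.rep := by rw [← hs', ← hs', hPQ]
    apply Subtype.ext
    rw [← P.1.mk_rep, ← Q.1.mk_rep, Projectivization.mk_eq_mk_iff']
    refine ⟨(c P)⁻¹ * c Q, ?_⟩
    rw [mul_smul, ← h1, smul_smul, inv_mul_cancel₀ (hc P), one_smul]
  have hdvd : ∏ P : S, (Polynomial.X - Polynomial.C (s P)) ^ m ∣ restrictLine w q F := by
    refine Finset.prod_dvd_of_coprime (fun P _ Q _ hPQ => ?_) fun P _ =>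
      X_sub_C_pow_dvd_restrictLine (hF P.1 P.2) (hc P) (hs' P)
    exact (Polynomial.pairwise_coprime_X_sub_C hinj hPQ).pow
  have hprod : (∏ P : S, (Polynomial.X - Polynomial.C (s P)) ^ m).natDegree = S.card * m := by
    rw [Polynomial.natDegree_prod_of_monic _ _ fun P _ => (Polynomial.monic_X_sub_C _).pow m]
    simp
  have hzero : restrictLine w q F = 0 := by
    by_contra h0
    have h1 := Polynomial.natDegree_le_of_dvd hdvd h0
    have h2 := natDegree_restrictLine_le w q F
    omega
  simpa [hzero] using (eval_restrictLine w q 0 F).symm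

/-- A linear form divides every polynomial vanishing at the nonzero points of its kernel. -/
lemma dvd_of_eval_eq_zero [Infinite k] {a : Fin 3 → k} (ha : a ≠ 0) {F : MvPolynomial (Fin 3) k}
    (h : ∀ w : Fin 3 → k, w ≠ 0 → ∑ i, a i * w i = 0 → eval w F = 0) :
    (∑ i, C (a i) * X i : MvPolynomial (Fin 3) k) ∣ F := by
  obtain ⟨j, hj⟩ := Function.ne_iff.1 ha
  simp only [Pi.zero_apply] at hj
  obtain ⟨l, hl⟩ := exists_ne j
  set φ : MvPolynomial (Fin 3) k := ∑ i, C (a i) * X i with hφ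
  let σ : Fin 3 → MvPolynomial (Fin 3) k :=
    fun i => X i - if i = j then C (a j)⁻¹ * φ else 0
  have hmod : φ ∣ F - aeval σ F := by
    rw [← Ideal.mem_span_singleton, ← Ideal.Quotient.eq]
    have : (Ideal.Quotient.mkₐ k (Ideal.span {φ})) =
        (Ideal.Quotient.mkₐ k (Ideal.span {φ})).comp (aeval σ) := by
      ext i
      simp only [AlgHom.comp_apply, aeval_X, Ideal.Quotient.mkₐ_eq_mk]
      rw [Ideal.Quotient.eq, Ideal.mem_span_singleton]
      by_cases hi : i = j
      · simp [σ, hi]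
      · simp [σ, hi]
    exact DFunLike.congr_fun this F
  have hzero : aeval σ F * X l = 0 := by
    apply MvPolynomial.funext
    intro v
    have hev : eval v (aeval σ F) = eval (fun i => eval v (σ i)) F := by
      rw [← bind₁, eval, eval₂Hom_bind₁]
      rfl
    rw [map_mul, eval_X, map_zero]
    by_cases hv : v l = 0
    · rw [hv, mul_zero]
    · rw [hev, h, zero_mul]
      · intro h0
        apply hv
        simpa [σ, hl] using congrFun h0 l
      · have hφv : eval v φ = ∑ i, a i * v i := by simp [hφ]
        simp only [σ, map_sub, eval_X, mul_sub, Finset.sum_sub_distrib, ← hφv]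
        simp [apply_ite, Finset.sum_ite_eq', mul_inv_cancel_left₀ hj]
  rw [mul_eq_zero, or_iff_left (X_ne_zero l)] at hzero
  rwa [hzero, sub_zero] at hmod

lemma dvd_of_totalDegree_lt [Infinite k] {φ : MvPolynomial (Fin 3) k} (hφ : φ.IsHomogeneous 1)
    (h0 : φ ≠ 0) {S : Finset (ℙ k (Fin 3 → k))} (hS : ∀ P ∈ S, eval P.rep φ = 0)
    {m : ℕ} {F : MvPolynomial (Fin 3) k} (hF : ∀ P ∈ S, VanishesToOrder m P F)
    (hdeg : F.totalDegree < S.card * m) : φ ∣ F := by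
  obtain ⟨a, rfl⟩ := exists_eq_sum_of_isHomogeneous_one hφ
  have ha : a ≠ 0 := by
    rintro rfl
    simp at h0
  let ℓ : (Fin 3 → k) →ₗ[k] k := ∑ i, a i • LinearMap.proj i
  have hℓ : ∀ w, ℓ w = ∑ i, a i * w i := fun w => by simp [ℓ]
  have hℓ0 : ℓ ≠ 0 := by
    obtain ⟨j, hj⟩ := Function.ne_iff.1 ha
    intro h
    have := hℓ (Pi.single j 1)
    rw [h] at this
    exact hj (by simpa [Pi.single_apply] using this.symm)
  have hK : Module.finrank k (LinearMap.ker ℓ) = 2 := by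
    have h1 := LinearMap.finrank_range_add_finrank_ker ℓ
    rw [LinearMap.range_eq_top.2 (LinearMap.surjective hℓ0)] at h1
    simp at h1
    omega
  refine dvd_of_eval_eq_zero ha fun w hw hwa => ?_
  refine eval_eq_zero_of_totalDegree_lt hK (fun P hP => ?_) hF hdeg ?_ hw
  · rw [LinearMap.mem_ker, hℓ]
    simpa using hS P hP
  · rw [LinearMap.mem_ker, hℓ, hwa]

lemma pow_dvd_of_totalDegree_lt [Infinite k] {φ : MvPolynomial (Fin 3) k}
    (hφ : φ.IsHomogeneous 1) (h0 : φ ≠ 0) {S : Finset (ℙ k (Fin 3 → k))}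
    (hS : ∀ P ∈ S, eval P.rep φ = 0) (s : ℕ) {m : ℕ} {F : MvPolynomial (Fin 3) k} (hF0 : F ≠ 0)
    (hF : ∀ P ∈ S, VanishesToOrder m P F)
    (hdeg : ∀ a < s, F.totalDegree < a + S.card * (m - a)) : φ ^ s ∣ F := by
  induction s generalizing m F with
  | zero => simp
  | succ s ih =>
    obtain ⟨G, rfl⟩ := dvd_of_totalDegree_lt hφ h0 hS hF (by simpa using hdeg 0 (by omega))
    have hG0 : G ≠ 0 := right_ne_zero_of_mul hF0
    rw [pow_succ']
    refine mul_dvd_mul_left φ (ih (m := m - 1) hG0 (fun P hP => ?_) fun a ha => ?_)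
    · cases m with
      | zero => intro c _; simp
      | succ m => exact (hF P hP).of_mul_left_of_eval_eq_zero hφ h0 (hS P hP)
    · have h1 := hdeg (a + 1) (by omega)
      rw [totalDegree_mul_of_isDomain h0 hG0, hφ.totalDegree h0] at h1
      rw [Nat.sub_sub, add_comm 1 a]
      omega

/-- A nonzero polynomial vanishing to order `2 * r` on the first `n + 1` lines of a line count
configuration has degree at least `r * (n + 2)`. -/
lemma le_totalDegree_of_vanishesToOrder [Infinite k] {t : ℕ}
    {T : Fin t → Finset (ℙ k (Fin 3 → k))} {φ : Fin t → MvPolynomial (Fin 3) k}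
    (hhom : ∀ i, (φ i).IsHomogeneous 1) (hne : ∀ i, φ i ≠ 0)
    (hcard : ∀ i : Fin t, (T i).card = (i : ℕ) + 1)
    (honline : ∀ i, ∀ P ∈ T i, eval P.rep (φ i) = 0)
    (hoff : ∀ i j, i ≠ j → ∀ P ∈ T i, eval P.rep (φ j) ≠ 0)
    (r n : ℕ) (hn : n < t) {F : MvPolynomial (Fin 3) k} (hF0 : F ≠ 0)
    (hF : ∀ i : Fin t, (i : ℕ) ≤ n → ∀ P ∈ T i, VanishesToOrder (2 * r) P F) :
    r * (n + 2) ≤ F.totalDegree := by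
  induction n generalizing F with
  | zero =>
    by_contra! hlt
    obtain ⟨G, rfl⟩ := pow_dvd_of_totalDegree_lt (hhom ⟨0, hn⟩) (hne _) (honline _) (2 * r) hF0
      (hF ⟨0, hn⟩ le_rfl) fun a ha => by
        rw [hcard]
        simp only [zero_add, one_mul]
        omega
    rw [totalDegree_mul_of_isDomain (left_ne_zero_of_mul hF0) (right_ne_zero_of_mul hF0),
      ((hhom _).pow _).totalDegree (left_ne_zero_of_mul hF0)] at hlt
    omega
  | succ n ih =>
    by_contra! hlt
    obtain ⟨G, rfl⟩ := pow_dvd_of_totalDegree_lt (hhom ⟨n + 1, hn⟩) (hne _) (honline _) r hF0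
      (hF ⟨n + 1, hn⟩ le_rfl) fun a ha => by
        rw [hcard]
        refine hlt.trans_le ?_
        obtain ⟨b, rfl⟩ := Nat.exists_eq_add_of_lt ha
        have : 2 * (a + b + 1) - a = a + 2 * b + 2 := by omega
        simp only [this]
        nlinarith [Nat.zero_le (n * b)]
    have hG := ih (by omega) (right_ne_zero_of_mul hF0) fun i hi P hP =>
      (hF i (by omega) P hP).of_pow_mul_left (hhom _)
        (hoff i _ (by rintro rfl; simp at hi) P hP) r
    rw [totalDegree_mul_of_isDomain (left_ne_zero_of_mul hF0) (right_ne_zero_of_mul hF0),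
      ((hhom _).pow _).totalDegree (left_ne_zero_of_mul hF0)] at hlt
    nlinarith

end LineCount

theorem stmt17 (k : Type*) [Field k] [IsAlgClosed k] [CharZero k]
    (t : ℕ) (ht : 0 < t)
    (W : Finset (ℙ k (Fin 3 → k)))
    (T : Fin t → Finset (ℙ k (Fin 3 → k)))
    (φ : Fin t → MvPolynomial (Fin 3) k)
    (hhom : ∀ i, (φ i).IsHomogeneous 1)
    (hne : ∀ i, φ i ≠ 0)
    (hprop : ∀ i j, i ≠ j → ∀ a : k, φ i ≠ a • φ j)
    (hW : ∀ P, P ∈ W ↔ ∃ i, P ∈ T i)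
    (hcard : ∀ i : Fin t, (T i).card = (i : ℕ) + 1)
    (honline : ∀ i, ∀ P ∈ T i, MvPolynomial.eval (Projectivization.rep P) (φ i) = 0)
    (hone : ∀ P ∈ W, ∀ i j : Fin t, i ≠ j →
      ¬(MvPolynomial.eval (Projectivization.rep P) (φ i) = 0 ∧
        MvPolynomial.eval (Projectivization.rep P) (φ j) = 0))
    (r : ℕ) (hr : 1 ≤ r) :
    r * alphaDeg k (fatIdeal k W 1) + r ≤ alphaDeg k (fatIdeal k W (2 * r)) := by
  classical
  have hoff : ∀ i j, i ≠ j → ∀ P ∈ T i, eval P.rep (φ j) ≠ 0 := fun i j hij P hP h =>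
    hone P ((hW P).2 ⟨i, hP⟩) i j hij ⟨honline i P hP, h⟩
  have hprod0 : ∏ i, φ i ≠ 0 := Finset.prod_ne_zero_iff.2 fun i _ => hne i
  have hprodhom : (∏ i, φ i).IsHomogeneous t := by
    simpa using IsHomogeneous.prod Finset.univ φ (fun _ => 1) fun i _ => hhom i
  have hmem : ∀ P ∈ W, ∏ i, φ i ∈ pointIdeal k P := by
    intro P hP c
    obtain ⟨i, hi⟩ := (hW P).1 hP
    rw [map_prod]
    refine Finset.prod_eq_zero (Finset.mem_univ i) ?_
    rw [eval_smul_of_isHomogeneous_one (hhom i), honline i P hi, mul_zero]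
  have hfat : ∀ m, (∏ i, φ i) ^ m ∈ fatIdeal k W m := by
    intro m
    simp only [fatIdeal, Submodule.mem_iInf]
    exact fun P hP => Ideal.pow_mem_pow (hmem P hP) m
  have hle : alphaDeg k (fatIdeal k W 1) ≤ t :=
    Nat.sInf_le ⟨_, hfat 1, pow_ne_zero 1 hprod0, by simpa using hprodhom⟩
  obtain ⟨F, hF, hF0, hFhom⟩ := Nat.sInf_mem (s := {d : ℕ | ∃ f ∈ fatIdeal k W (2 * r),
    f ≠ 0 ∧ MvPolynomial.IsHomogeneous f d})
    ⟨_, _, hfat (2 * r), pow_ne_zero _ hprod0, hprodhom.pow _⟩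
  have hdeg := le_totalDegree_of_vanishesToOrder hhom hne hcard honline hoff r (t - 1) (by omega)
    hF0 fun i _ P hP => by
      simp only [fatIdeal, Submodule.mem_iInf] at hF
      exact vanishesToOrder_of_mem_pow (hF P ((hW P).2 ⟨i, hP⟩))
  rw [hFhom.totalDegree hF0, show t - 1 + 2 = t + 1 by omega] at hdeg
  calc r * alphaDeg k (fatIdeal k W 1) + r ≤ r * t + r := by gcongr
    _ = r * (t + 1) := by ring
    _ ≤ _ := hdeg
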